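/- Suppose X and Y are standard Borel spaces, μ is a Borel measure on X, and ν is a Borel measure on Y. Suppose R ⊆ X × Y is a Borel, locally finite, (μ,ν)-preserving set. Assume there exist numbers a, b > 0 such that |R_x| ≥ a for μ-almost every x ∈ X and |R^y| ≤ b for ν-almost every y ∈ Y. Then ν(R_A) ≥ (a/b)·μ(A) for all Borel subsets A ⊆ X. -/

import Mathlib

/-
The proof is double counting. Novikov's separation theorem splits a Borel set whose sections are
finite into countably many disjoint graphs of Borel partial injections from `X` to `Y`. A
`(μ,ν)`-preserving set carries `μ` to `ν` along each of these graphs, so the countable sum gives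
`∫ |R_x| dμ = ∫ |R^y| dν`. For `Q = R ∩ (A × Y)` the left side is at least `a * μ A`, and the right
side is at most `b * ν R_A`, because `Q^y` is empty unless `y ∈ R_A`.
-/

open MeasureTheory Set
open scoped ENNReal

/-- `R ⊆ X × Y` is `(μ,ν)`-preserving: every Borel bijection `f : A → B` between Borel
subsets whose graph is contained in `R` satisfies `μ(A) = ν(B)`. -/
def MeasurePreservingRel {X Y : Type*} [MeasurableSpace X] [MeasurableSpace Y]
    (R : Set (X × Y)) (μ : Measure X) (ν : Measure Y) : Prop :=
  ∀ (A : Set X) (f : X → Y), MeasurableSet A → Measurable f → Set.InjOn f A →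
    (∀ x ∈ A, (x, f x) ∈ R) → μ A = ν (f '' A)

section Separation

open Function

theorem cylinder_bar_induction {E : ℕ → Type*} [∀ n, Nonempty (E n)] {P : Set (∀ n, E n) → Prop}
    (bar : ∀ w, ∃ t, P (PiNat.cylinder w t))
    (step : ∀ z t, (∀ j, P (PiNat.cylinder (update z t j) (t + 1))) → P (PiNat.cylinder z t)) :
    P univ := by
  by_contra hP
  have bad_extension : ∀ z t, ∃ j,
      ¬ P (PiNat.cylinder z t) → ¬ P (PiNat.cylinder (update z t j) (t + 1)) := fun z t => by
    by_contra! h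
    exact (h (z t)).1 (step z t fun j => (h j).2)
  choose j hj using bad_extension
  let Z : ℕ → ∀ n, E n := Nat.rec (fun _ => Classical.arbitrary _) fun t z => update z t (j z t)
  have bad_Z : ∀ t, ¬ P (PiNat.cylinder (Z t) t) := fun t => by
    induction t with
    | zero => rwa [PiNat.cylinder_zero]
    | succ t ih => exact hj (Z t) t ih
  let w : ∀ n, E n := fun t => Z (t + 1) t
  have mem_Z : ∀ t, w ∈ PiNat.cylinder (Z t) t := fun t => by
    induction t with
    | zero => simp
    | succ t ih =>
      intro s hs
      rcases Nat.lt_succ_iff_lt_or_eq.1 hs with hs | rfl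
      · exact (ih s hs).trans (update_of_ne hs.ne _ _).symm
      · rfl
  obtain ⟨t, ht⟩ := bar w
  exact bad_Z t (PiNat.mem_cylinder_iff_eq.1 (mem_Z t) ▸ ht)

theorem exists_image_cylinder_subset {E : ℕ → Type*} [∀ n, TopologicalSpace (E n)]
    [∀ n, DiscreteTopology (E n)] {X : Type*} [TopologicalSpace X] {f : (∀ n, E n) → X}
    (hf : Continuous f) (w : ∀ n, E n) {U : Set X} (hU : IsOpen U) (hw : f w ∈ U) :
    ∃ t, f '' PiNat.cylinder w t ⊆ U := by
  obtain ⟨_, ⟨z, t, rfl⟩, hwz, hzU⟩ :=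
    (PiNat.isTopologicalBasis_cylinders E).exists_subset_of_mem_open hw (hU.preimage hf)
  exact ⟨t, image_subset_iff.2 ((PiNat.mem_cylinder_iff_eq.1 hwz).trans_subset hzU)⟩

/-- Joint separation of a family of sets, as in Novikov's separation theorem: the sets can be
enlarged to measurable sets without a common point. For two sets this is
`MeasureTheory.MeasurablySeparable`. -/
def JointlySeparable {ι X : Type*} [MeasurableSpace X] (A : ι → Set X) : Prop :=
  ∃ C : ι → Set X, (∀ i, MeasurableSet (C i)) ∧ (∀ i, A i ⊆ C i) ∧ ⋂ i, C i = ∅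

namespace JointlySeparable

variable {ι X : Type*} [MeasurableSpace X] {A : ι → Set X}

lemma of_update_iUnion [DecidableEq ι] {κ : Type*} [Countable κ] {S : κ → Set X} (i : ι)
    (hS : ∀ j, JointlySeparable (update A i (S j))) :
    JointlySeparable (update A i (⋃ j, S j)) := by
  choose C hCm hC hC0 using hS
  refine ⟨update (fun n => ⋂ j, C j n) i (⋃ j, C j i), fun n => ?_, fun n => ?_,
    eq_empty_of_forall_notMem fun x hx => ?_⟩
  · rcases eq_or_ne n i with rfl | hn
    · simpa using MeasurableSet.iUnion fun j => hCm j n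
    · simpa [hn] using MeasurableSet.iInter fun j => hCm j n
  · rcases eq_or_ne n i with rfl | hn
    · simpa using iUnion_mono fun j => by simpa using hC j n
    · simpa [hn] using fun j => by simpa [hn] using hC j n
  · rw [mem_iInter] at hx
    obtain ⟨j, hj⟩ : ∃ j, x ∈ C j i := by simpa using hx i
    have hxC : x ∈ ⋂ n, C j n := mem_iInter.2 fun n => by
      rcases eq_or_ne n i with rfl | hn
      · exact hj
      · have hxn : ∀ j, x ∈ C j n := by simpa [hn] using hx n
        exact hxn j
    simp [hC0 j] at hxC

lemma of_measurablySeparable {i j : ι} (hij : i ≠ j) (h : MeasurablySeparable (A i) (A j)) :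
    JointlySeparable A := by
  classical
  obtain ⟨U, hAU, hAU', hU⟩ := h
  refine ⟨update (update (fun _ => univ) j Uᶜ) i U, fun n => ?_, fun n => ?_,
    eq_empty_of_forall_notMem fun x hx => ?_⟩
  · simp only [update_apply]
    split_ifs <;> simp [hU]
  · simp only [update_apply]
    split_ifs with h h'
    · exact h ▸ hAU
    · exact h' ▸ hAU'.subset_compl_right
    · exact subset_univ _
  · rw [mem_iInter] at hx
    have hxU : x ∈ U := by simpa using hx i
    have hxU' : x ∉ U := by simpa [hij.symm] using hx j
    exact hxU' hxU

variable [TopologicalSpace X] [T2Space X] [OpensMeasurableSpace X]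

/- Coordinate `t` of the parameter moves only the set with index `c t`, so refining a cylinder
splits one set and leaves the others fixed, which is the situation of `of_update_iUnion`. -/
lemma range_of_forall_coordinate {g : ι → (ℕ → ℕ) → X} (hg : ∀ i, Continuous (g i)) (c : ℕ → ι)
    (hc : ∀ t, ∀ i ≠ c t, ∀ z j, g i (update z t j) = g i z) (h : ⋂ i, range (g i) = ∅) :
    JointlySeparable fun i => range (g i) := by
  classical
  suffices JointlySeparable fun i => g i '' univ by simpa only [image_univ] using this
  refine cylinder_bar_induction (P := fun S => JointlySeparable fun i => g i '' S)
    (fun w => ?_) fun z t hz => ?_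
  · obtain ⟨i, hi⟩ : ∃ i, g i w ≠ g (c 0) w := by
      by_contra! hw
      exact (h ▸ mem_iInter.2 fun i => ⟨w, hw i⟩ : g (c 0) w ∈ (∅ : Set X))
    obtain ⟨U, V, hU, hV, hwU, hwV, hUV⟩ := t2_separation hi
    obtain ⟨s, hs⟩ := exists_image_cylinder_subset (hg i) w hU hwU
    obtain ⟨t, ht⟩ := exists_image_cylinder_subset (hg (c 0)) w hV hwV
    refine ⟨max s t, of_measurablySeparable (i := i) (j := c 0) (by rintro rfl; exact hi rfl)
      ⟨U, ?_, ?_, hU.measurableSet⟩⟩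
    · exact (image_mono (PiNat.cylinder_anti w (le_max_left s t))).trans hs
    · exact hUV.symm.mono_left ((image_mono (PiNat.cylinder_anti w (le_max_right s t))).trans ht)
  · have hsplit : g (c t) '' PiNat.cylinder z t =
        ⋃ j, g (c t) '' PiNat.cylinder (update z t j) (t + 1) := by
      rw [← image_iUnion, ← PiNat.iUnion_cylinder_update z t]
    have hfixed : ∀ j, ∀ i ≠ c t,
        g i '' PiNat.cylinder (update z t j) (t + 1) = g i '' PiNat.cylinder z t := by
      refine fun j i hi => (image_mono ?_).antisymm ?_
      · exact PiNat.iUnion_cylinder_update z t ▸ subset_iUnion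
          (fun j => PiNat.cylinder (update z t j) (t + 1)) j
      · rintro _ ⟨y, hy, rfl⟩
        refine ⟨update y t j, fun s hs => ?_, hc t i hi y j⟩
        rcases Nat.lt_succ_iff_lt_or_eq.1 hs with hs | rfl
        · rw [update_of_ne hs.ne, update_of_ne hs.ne, hy s hs]
        · rw [update_self, update_self]
    rw [← update_eq_self (c t) fun i => g i '' PiNat.cylinder z t, hsplit]
    refine of_update_iUnion (c t) fun j => ?_
    rw [update_eq_iff.2 ⟨rfl, fun i hi => (hfixed j i hi).symm⟩]
    exact hz j

theorem of_analyticSet [Countable ι] (hA : ∀ i, AnalyticSet (A i)) (h : ⋂ i, A i = ∅) :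
    JointlySeparable A := by
  rcases isEmpty_or_nonempty ι with hι | hι
  · exact ⟨A, isEmptyElim, isEmptyElim, h⟩
  by_cases! hne : ∃ i, A i = ∅
  · obtain ⟨i, hi⟩ := hne
    refine ⟨fun j => {_x | (A j).Nonempty}, fun j => .const _, fun j x hx => ⟨x, hx⟩, ?_⟩
    exact eq_empty_of_forall_notMem fun x hx => (mem_iInter.1 hx i).ne_empty hi
  have param : ∀ i, ∃ f : (ℕ → ℕ) → X, Continuous f ∧ range f = A i := fun i =>
    ((AnalyticSet_def (A i)).mp (hA i)).resolve_left (hne i).ne_empty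
  choose f hf hfA using param
  obtain rfl : (fun i => range (f i)) = A := funext hfA
  have := Encodable.ofCountable ι
  have := Denumerable.ofEncodableOfInfinite (ι × ℕ)
  let e : ι × ℕ ≃ ℕ := Denumerable.eqv _
  have hrange : ∀ i, range (fun z : ℕ → ℕ => f i fun l => z (e (i, l))) = range (f i) := by
    intro i
    refine Surjective.range_comp (fun α => ⟨fun t => α (e.symm t).2, ?_⟩) (f i)
    simp
  simp only [← hrange] at h ⊢
  refine range_of_forall_coordinate (fun i => ?_) (fun t => (e.symm t).1) (fun t i hi z j => ?_) h
  · exact (hf i).comp (by fun_prop)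
  · congr 1 with l
    exact update_of_ne (by rintro rfl; simp at hi) _ _

end JointlySeparable

end Separation

section FiniteFibers

open Function

variable {Z X Y : Type*} [MeasurableSpace Z] [StandardBorelSpace Z] [MeasurableSpace X]
  [MeasurableSpace Y] {s : Set Z}

/- A point of `s` is isolated from the rest of its fiber by some basic open set `u n`. The sets
`Prod.fst '' P n` of points not isolated by `u n` are analytic and have no common point, so they are
jointly separable. Two points of one fiber both isolated by `u n` coincide. -/
theorem exists_iUnion_eq_forall_injOn [MeasurableEq X] (hs : MeasurableSet s) {f : Z → X}
    (hf : Measurable f) (hfin : ∀ x, (s ∩ f ⁻¹' {x}).Finite) :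
    ∃ S : ℕ → Set Z, (∀ n, MeasurableSet (S n)) ∧ (∀ n, InjOn f (S n)) ∧ ⋃ n, S n = s := by
  let := upgradeStandardBorel Z
  obtain ⟨u, hu⟩ := TopologicalSpace.exists_seq_basis Z
  have hum : ∀ n, MeasurableSet (u n) := fun n => (hu.isOpen (mem_range_self n)).measurableSet
  let P : ℕ → Set (Z × Z) := fun n =>
    s ×ˢ s ∩ ((u n)ᶜ ×ˢ univ ∪ univ ×ˢ u n ∩ {p | p.2 ≠ p.1} ∩ {p | f p.2 = f p.1})
  have hP : ∀ n, MeasurableSet (P n) := fun n => by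
    have hne : MeasurableSet {p : Z × Z | p.2 ≠ p.1} :=
      (measurableSet_eq_fun measurable_snd measurable_fst).compl
    have hfeq : MeasurableSet {p : Z × Z | f p.2 = f p.1} :=
      measurableSet_eq_fun (hf.comp measurable_snd) (hf.comp measurable_fst)
    exact (hs.prod hs).inter
      (((hum n).compl.prod .univ).union (((MeasurableSet.univ.prod (hum n)).inter hne).inter hfeq))
  have hP_empty : ⋂ n, Prod.fst '' P n = ∅ := eq_empty_of_forall_notMem fun z hz => by
    rw [mem_iInter] at hz
    have hclosed : IsClosed ((s ∩ f ⁻¹' {f z}) \ {z}) := (hfin (f z)).sdiff.isClosed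
    obtain ⟨_, ⟨n, rfl⟩, hzn, hn⟩ :=
      hu.exists_subset_of_mem_open (fun h => h.2 rfl) hclosed.isOpen_compl
    obtain ⟨⟨_, z'⟩, ⟨⟨-, hz's⟩, ⟨hzn', -⟩ | ⟨⟨⟨-, hz'n⟩, hne⟩, hfz⟩⟩, rfl⟩ := hz n
    · exact hzn' hzn
    · exact hn hz'n ⟨⟨hz's, hfz⟩, hne⟩
  obtain ⟨C, hCm, hPC, hC⟩ := JointlySeparable.of_analyticSet
    (fun n => (hP n).analyticSet_image measurable_fst) hP_empty
  refine ⟨fun n => s \ C n, fun n => hs.diff (hCm n), fun n z hz z' hz' hfz => ?_, ?_⟩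
  · have mem_u : ∀ z ∈ s \ C n, z ∈ u n := fun z hz => by
      by_contra hzn
      exact hz.2 (hPC n ⟨(z, z), ⟨⟨hz.1, hz.1⟩, .inl ⟨hzn, mem_univ z⟩⟩, rfl⟩)
    by_contra hne
    exact hz'.2 (hPC n ⟨(z', z), ⟨⟨hz'.1, hz.1⟩,
      .inr ⟨⟨⟨mem_univ z', mem_u z hz⟩, hne⟩, hfz⟩⟩, rfl⟩)
  · rw [← sdiff_iInter, hC, sdiff_empty]

theorem exists_disjoint_iUnion_eq_forall_injOn [MeasurableEq X] [MeasurableEq Y]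
    (hs : MeasurableSet s) {f : Z → X} {g : Z → Y} (hf : Measurable f) (hg : Measurable g)
    (hfin : ∀ x, (s ∩ f ⁻¹' {x}).Finite) (hgfin : ∀ y, (s ∩ g ⁻¹' {y}).Finite) :
    ∃ T : ℕ → Set Z, (∀ n, MeasurableSet (T n)) ∧ (∀ n, InjOn f (T n)) ∧ (∀ n, InjOn g (T n)) ∧
      Pairwise (Disjoint on T) ∧ ⋃ n, T n = s := by
  obtain ⟨S, hSm, hS, hSs⟩ := exists_iUnion_eq_forall_injOn hs hf hfin
  obtain ⟨S', hSm', hS', hSs'⟩ := exists_iUnion_eq_forall_injOn hs hg hgfin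
  let V : ℕ → Set Z := fun n => S n.unpair.1 ∩ S' n.unpair.2
  have hVs : ⋃ n, V n = s := by
    rw [iUnion_unpair fun i j => S i ∩ S' j, ← iUnion_inter_iUnion, hSs, hSs', inter_self]
  refine ⟨disjointed V, fun n => .disjointed (fun n => (hSm _).inter (hSm' _)) n,
    fun n => (hS n.unpair.1).mono ((disjointed_subset V n).trans inter_subset_left),
    fun n => (hS' n.unpair.2).mono ((disjointed_subset V n).trans inter_subset_right),
    disjoint_disjointed V, iUnion_disjointed.trans hVs⟩

end FiniteFibers

section DoubleCounting

open Function

variable {Z X : Type*} [MeasurableSpace Z]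

lemma count_inter_preimage_singleton [MeasurableSingletonClass Z] {f : Z → X} {s : Set Z}
    (hf : InjOn f s) (x : X) :
    Measure.count (s ∩ f ⁻¹' {x}) = (f '' s).indicator (1 : X → ℝ≥0∞) x := by
  by_cases hx : x ∈ f '' s
  · obtain ⟨z, hz, rfl⟩ := hx
    have hfiber : s ∩ f ⁻¹' {f z} = {z} :=
      Subset.antisymm (fun z' hz' => hf hz'.1 hz hz'.2) (singleton_subset_iff.2 ⟨hz, rfl⟩)
    rw [hfiber, Measure.count_singleton, indicator_of_mem (mem_image_of_mem f hz), Pi.one_apply]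
  · have hfiber : s ∩ f ⁻¹' {x} = ∅ :=
      eq_empty_of_forall_notMem fun z hz => hx ⟨z, hz.1, hz.2⟩
    rw [hfiber, measure_empty, indicator_of_notMem hx]

variable [MeasurableSpace X]

lemma lintegral_count_fiber_iUnion [StandardBorelSpace Z]
    [MeasurableSpace.CountablySeparated X] (μ : Measure X) {f : Z → X} (hf : Measurable f)
    {T : ℕ → Set Z} (hT : ∀ n, MeasurableSet (T n)) (hinj : ∀ n, InjOn f (T n))
    (hdisj : Pairwise (Disjoint on T)) :
    ∫⁻ x, Measure.count ((⋃ n, T n) ∩ f ⁻¹' {x}) ∂μ = ∑' n, μ (f '' T n) := by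
  have := MeasurableSpace.measurableSingletonClass_of_countablySeparated (α := X)
  have himg : ∀ n, MeasurableSet (f '' T n) := fun n => (hT n).image_of_measurable_injOn hf (hinj n)
  calc ∫⁻ x, Measure.count ((⋃ n, T n) ∩ f ⁻¹' {x}) ∂μ
      = ∫⁻ x, ∑' n, (f '' T n).indicator 1 x ∂μ := by
        refine lintegral_congr fun x => ?_
        rw [iUnion_inter, measure_iUnion
          (fun m n hmn => (hdisj hmn).mono inter_subset_left inter_subset_left)
          fun n => (hT n).inter (hf (measurableSet_singleton x))]
        exact tsum_congr fun n => count_inter_preimage_singleton (hinj n) x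
    _ = ∑' n, μ (f '' T n) := by
        rw [lintegral_tsum fun n => (measurable_one.indicator (himg n)).aemeasurable]
        simp only [lintegral_indicator_one (himg _)]

lemma lintegral_count_fiber_le (μ : Measure X) {f : Z → X} {s : Set Z} {b : ℝ≥0∞}
    (hb : ∀ᵐ x ∂μ, Measure.count (s ∩ f ⁻¹' {x}) ≤ b) :
    ∫⁻ x, Measure.count (s ∩ f ⁻¹' {x}) ∂μ ≤ b * μ (f '' s) := by
  refine (lintegral_mono_ae (hb.mono fun x hx => ?_)).trans
    (lintegral_indicator_const_le (f '' s) b)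
  refine le_indicator_apply (fun _ => hx) fun hxs => ?_
  have hfiber : s ∩ f ⁻¹' {x} = ∅ := eq_empty_of_forall_notMem fun z hz => hxs ⟨z, hz.1, hz.2⟩
  rw [hfiber, measure_empty]

lemma lintegral_count_fiber_inter_preimage (μ : Measure X) (f : Z → X) (s : Set Z) {A : Set X}
    (hA : MeasurableSet A) :
    ∫⁻ x, Measure.count ((s ∩ f ⁻¹' A) ∩ f ⁻¹' {x}) ∂μ =
      ∫⁻ x in A, Measure.count (s ∩ f ⁻¹' {x}) ∂μ := by
  rw [← lintegral_indicator hA]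
  refine lintegral_congr fun x => ?_
  by_cases hx : x ∈ A
  · rw [indicator_of_mem hx, inter_assoc, ← preimage_inter,
      inter_eq_right.2 (singleton_subset_iff.2 hx)]
  · rw [indicator_of_notMem hx, inter_assoc, ← preimage_inter,
      inter_singleton_eq_empty.2 hx, preimage_empty, inter_empty, measure_empty]

end DoubleCounting

namespace MeasurePreservingRel

variable {X Y : Type*} [MeasurableSpace X] [MeasurableSpace Y] {R S : Set (X × Y)}
  {μ : Measure X} {ν : Measure Y}

lemma mono (h : MeasurePreservingRel R μ ν) (hSR : S ⊆ R) : MeasurePreservingRel S μ ν :=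
  fun A f hA hf hinj hgraph => h A f hA hf hinj fun x hx => hSR (hgraph x hx)

variable [StandardBorelSpace X] [StandardBorelSpace Y]

lemma measure_fst_image_eq (h : MeasurePreservingRel S μ ν) (hS : MeasurableSet S)
    (hfst : InjOn Prod.fst S) (hsnd : InjOn Prod.snd S) :
    μ (Prod.fst '' S) = ν (Prod.snd '' S) := by
  have := hS.standardBorel
  have hemb : MeasurableEmbedding fun q : S => q.1.1 :=
    (measurable_fst.comp measurable_subtype_coe).measurableEmbedding (injOn_iff_injective.1 hfst)
  rcases S.eq_empty_or_nonempty with rfl | ⟨p, -⟩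
  · simp
  obtain ⟨f, hf, hfS⟩ := hemb.exists_measurable_extend
    (measurable_snd.comp measurable_subtype_coe : Measurable fun q : S => q.1.2) fun _ => ⟨p.2⟩
  have hf_graph : ∀ q ∈ S, f q.1 = q.2 := fun q hq => congrFun hfS ⟨q, hq⟩
  have himg : f '' (Prod.fst '' S) = Prod.snd '' S := by
    rw [image_image]
    exact image_congr hf_graph
  rw [← himg]
  refine h _ f (hS.image_of_measurable_injOn measurable_fst hfst) hf ?_ ?_
  · rintro _ ⟨q, hq, rfl⟩ _ ⟨r, hr, rfl⟩ hqr
    rw [hf_graph q hq, hf_graph r hr] at hqr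
    rw [hsnd hq hr hqr]
  · rintro _ ⟨q, hq, rfl⟩
    rw [hf_graph q hq]
    exact hq

theorem lintegral_count_fiber_eq (h : MeasurePreservingRel R μ ν) (hR : MeasurableSet R)
    (hfst : ∀ x, (R ∩ Prod.fst ⁻¹' {x}).Finite) (hsnd : ∀ y, (R ∩ Prod.snd ⁻¹' {y}).Finite) :
    ∫⁻ x, Measure.count (R ∩ Prod.fst ⁻¹' {x}) ∂μ =
      ∫⁻ y, Measure.count (R ∩ Prod.snd ⁻¹' {y}) ∂ν := by
  obtain ⟨T, hT, hT_fst, hT_snd, hdisj, rfl⟩ :=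
    exists_disjoint_iUnion_eq_forall_injOn hR measurable_fst measurable_snd hfst hsnd
  rw [lintegral_count_fiber_iUnion μ measurable_fst hT hT_fst hdisj,
    lintegral_count_fiber_iUnion ν measurable_snd hT hT_snd hdisj]
  exact tsum_congr fun n =>
    (h.mono (subset_iUnion T n)).measure_fst_image_eq (hT n) (hT_fst n) (hT_snd n)

theorem mul_measure_le_mul_measure_snd_image (h : MeasurePreservingRel R μ ν)
    (hR : MeasurableSet R) (hfst : ∀ x, (R ∩ Prod.fst ⁻¹' {x}).Finite)
    (hsnd : ∀ y, (R ∩ Prod.snd ⁻¹' {y}).Finite) {a b : ℝ≥0∞}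
    (ha : ∀ᵐ x ∂μ, a ≤ Measure.count (R ∩ Prod.fst ⁻¹' {x}))
    (hb : ∀ᵐ y ∂ν, Measure.count (R ∩ Prod.snd ⁻¹' {y}) ≤ b)
    {A : Set X} (hA : MeasurableSet A) :
    a * μ A ≤ b * ν (Prod.snd '' (R ∩ Prod.fst ⁻¹' A)) := by
  set Q := R ∩ Prod.fst ⁻¹' A
  have hQR : Q ⊆ R := inter_subset_left
  calc a * μ A = ∫⁻ _ in A, a ∂μ := (setLIntegral_const A a).symm
    _ ≤ ∫⁻ x in A, Measure.count (R ∩ Prod.fst ⁻¹' {x}) ∂μ :=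
        lintegral_mono_ae (ae_restrict_of_ae ha)
    _ = ∫⁻ x, Measure.count (Q ∩ Prod.fst ⁻¹' {x}) ∂μ :=
        (lintegral_count_fiber_inter_preimage μ Prod.fst R hA).symm
    _ = ∫⁻ y, Measure.count (Q ∩ Prod.snd ⁻¹' {y}) ∂ν :=
        (h.mono hQR).lintegral_count_fiber_eq (hR.inter (measurable_fst hA))
          (fun x => (hfst x).subset (inter_subset_inter_left _ hQR))
          fun y => (hsnd y).subset (inter_subset_inter_left _ hQR)
    _ ≤ b * ν (Prod.snd '' Q) := lintegral_count_fiber_le ν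
        (hb.mono fun y => (measure_mono (inter_subset_inter_left _ hQR)).trans)

end MeasurePreservingRel

section Sections

variable {X Y : Type*}

lemma inter_fst_preimage_singleton (R : Set (X × Y)) (x : X) :
    R ∩ Prod.fst ⁻¹' {x} = (fun y => (x, y)) '' {y | (x, y) ∈ R} := by
  ext ⟨x', y⟩
  grind

lemma inter_snd_preimage_singleton (R : Set (X × Y)) (y : Y) :
    R ∩ Prod.snd ⁻¹' {y} = (fun x => (x, y)) '' {x | (x, y) ∈ R} := by
  ext ⟨x, y'⟩
  grind

lemma count_image_eq_ofReal_ncard {α β : Type*} [MeasurableSpace β] [MeasurableSingletonClass β]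
    {f : α → β} (hf : Function.Injective f) {s : Set α} (hs : s.Finite) :
    Measure.count (f '' s) = ENNReal.ofReal s.ncard := by
  rw [Measure.count_apply (hs.image f).measurableSet, hf.encard_image, ← hs.cast_ncard_eq,
    ENNReal.ofReal_natCast, ENat.toENNReal_coe]

end Sections

/-- If `R` is a Borel, locally finite, `(μ,ν)`-preserving set with `|R_x| ≥ a` for
`μ`-a.e. `x` and `|R^y| ≤ b` for `ν`-a.e. `y`, then `ν(R_A) ≥ (a/b)·μ(A)` for all Borel
`A ⊆ X`. -/
theorem stmt5 {X Y : Type*} [MeasurableSpace X] [StandardBorelSpace X]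
    [MeasurableSpace Y] [StandardBorelSpace Y]
    (μ : Measure X) (ν : Measure Y)
    (R : Set (X × Y)) (hR : MeasurableSet R)
    (hlocX : ∀ x : X, {y | (x, y) ∈ R}.Finite)
    (hlocY : ∀ y : Y, {x | (x, y) ∈ R}.Finite)
    (hpres : MeasurePreservingRel R μ ν)
    (a b : ℝ) (ha : 0 < a) (hb : 0 < b)
    (hax : ∀ᵐ x ∂μ, a ≤ ({y | (x, y) ∈ R}.ncard : ℝ))
    (hby : ∀ᵐ y ∂ν, ({x | (x, y) ∈ R}.ncard : ℝ) ≤ b)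
    (A : Set X) (hA : MeasurableSet A) :
    ENNReal.ofReal (a / b) * μ A ≤ ν {y | ∃ x ∈ A, (x, y) ∈ R} := by
  have count_fst : ∀ x, Measure.count (R ∩ Prod.fst ⁻¹' {x}) =
      ENNReal.ofReal {y | (x, y) ∈ R}.ncard := fun x => by
    rw [inter_fst_preimage_singleton,
      count_image_eq_ofReal_ncard (Prod.mk_right_injective x) (hlocX x)]
  have count_snd : ∀ y, Measure.count (R ∩ Prod.snd ⁻¹' {y}) =
      ENNReal.ofReal {x | (x, y) ∈ R}.ncard := fun y => by
    rw [inter_snd_preimage_singleton,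
      count_image_eq_ofReal_ncard (Prod.mk_left_injective y) (hlocY y)]
  have key : ENNReal.ofReal a * μ A ≤
      ENNReal.ofReal b * ν (Prod.snd '' (R ∩ Prod.fst ⁻¹' A)) := by
    refine hpres.mul_measure_le_mul_measure_snd_image hR
      (fun x => inter_fst_preimage_singleton R x ▸ (hlocX x).image _)
      (fun y => inter_snd_preimage_singleton R y ▸ (hlocY y).image _) ?_ ?_ hA
    · exact hax.mono fun x hx => (count_fst x).symm ▸ ENNReal.ofReal_le_ofReal hx
    · exact hby.mono fun y hy => (count_snd y).symm ▸ ENNReal.ofReal_le_ofReal hy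
  have image_eq : Prod.snd '' (R ∩ Prod.fst ⁻¹' A) = {y | ∃ x ∈ A, (x, y) ∈ R} := by
    ext y
    simp [and_comm]
  rw [ENNReal.ofReal_div_of_pos hb, ENNReal.div_eq_inv_mul, mul_assoc, ← image_eq]
  exact (ENNReal.inv_mul_le_iff (by simpa using hb) ENNReal.ofReal_ne_top).2 key
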